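/- Let F be a countable set, π and π_n probability vectors on F, v : F → (0,∞), f : F → [1,∞), and suppose C̄ := sup_{x∈F} f(x)/v(x) < ∞. Define π̂(x) := π(x)(f(x)/v(x)) / Σ_{z∈F} π(z)(f(z)/v(z)) and π̂_n(x) := π_n(x)(f(x)/v(x)) / Σ_{z∈F} π_n(z)(f(z)/v(z)). Suppose Σ_x π̂(x) v(x) ≤ b̂ for some b̂ > 0, suppose Σ_x π_n(x) f(x) ≤ b for some b > 0, and suppose Ê ≥ 0 is such that for every ĝ : F → ℝ with 0 < ĝ(x) ≤ v(x) for all x and Σ_x π̂(x) ĝ(x) < ∞, one has Σ_x |π̂(x) − π̂_n(x)| ĝ(x) ≤ Ê · Σ_x π̂(x) ĝ(x). Then for every g : F → ℝ with 1 ≤ g(x) ≤ f(x) for all x, Σ_x |π(x) − π_n(x)| g(x) ≤ Ê · [1 + min((1 + Ê)/max(1 − min(Ê,1), 1/(b̂ C̄)), b)] · Σ_x π(x) g(x). -/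

import Mathlib

/-!
Write `S = ∑ π f / v` and `T = ∑ π_n f / v` for the normalizing constants. Testing the hypothesis
with `ĝ = h v / f`, where `0 < h ≤ f`, cancels the weight `f / v` and leaves
`∑ |π / S - π_n / T| h ≤ Ê (∑ π h) / S`. Only `h = 1` and `h = g` are needed. The former gives
`|1 / S - 1 / T| ≤ Ê / S`, that is `|S - T| ≤ Ê T`; with the latter and the splitting
`π - π_n = S (π / S - π_n / T) + (S / T - 1) π_n` it yields
`∑ |π - π_n| g ≤ Ê (∑ π g + ∑ π_n g)`.

There are two ways to bound `∑ π_n g` by a multiple of `∑ π g`. It is at most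
`b ≤ b ∑ π g`, because `1 ≤ g ≤ f`. It is also at most `(T / S) (1 + Ê) ∑ π g`, by `h = g`, where
`S / T ≥ 1 - Ê` and, because `1 ≤ ∑ π f = S ∑ π̂ v ≤ b̂ S` and `T ≤ C̄`, also `S / T ≥ 1 / (b̂ C̄)`.
-/

/-- The transformed probability vector `π̂(x) = π(x)(f(x)/v(x)) / Σ_z π(z)(f(z)/v(z))`. -/
noncomputable def hatP {F : Type*} (p f v : F → ℝ) (x : F) : ℝ :=
  p x * (f x / v x) / ∑' z, p z * (f z / v z)

section Scalar

lemma div_mul_mul_div_cancel {K : Type*} [Field K] {a b : K} (ha : a ≠ 0) (hb : b ≠ 0) (c d : K) :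
    c * (a / b) * (d * (b / a)) = c * d := by
  field_simp

variable {B C E G M S T a b c m : ℝ}

lemma abs_sub_le_mul_abs_div_sub_div_add (hS : 0 < S) (hT : 0 < T) (hST : |S - T| ≤ E * T)
    (hc : 0 ≤ c) : |a - c| ≤ S * |a / S - c / T| + E * c := by
  have hsplit : a - c = S * (a / S - c / T) + (S - T) / T * c := by
    field_simp
    ring
  have hratio : |(S - T) / T| ≤ E := by
    rwa [abs_div, abs_of_pos hT, div_le_iff₀ hT]
  calc |a - c| ≤ |S * (a / S - c / T)| + |(S - T) / T * c| := hsplit ▸ abs_add_le _ _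
    _ = S * |a / S - c / T| + |(S - T) / T| * c := by
      rw [abs_mul, abs_mul, abs_of_pos hS, abs_of_nonneg hc]
    _ ≤ S * |a / S - c / T| + E * c := by gcongr

lemma max_one_sub_min_le_div (hS : 0 < S) (hT : 0 < T) (hST : |S - T| ≤ E * T)
    (hTC : T ≤ C) (hB : 1 ≤ B * S) : max (1 - min E 1) (1 / (B * C)) ≤ S / T := by
  have hB0 : 0 < B := pos_of_mul_pos_left (one_pos.trans_le hB) hS.le
  have hE : 1 - E ≤ S / T := by
    rw [le_div_iff₀ hT]
    linarith [neg_abs_le (S - T)]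
  have hmin : 1 - min E 1 ≤ S / T := by
    rw [sub_le_comm]
    exact le_min (sub_le_comm.1 hE) (sub_le_self 1 (div_pos hS hT).le)
  have hBC : 1 / (B * C) ≤ S / T := by
    rw [div_le_div_iff₀ (mul_pos hB0 (hT.trans_le hTC)) hT]
    calc 1 * T ≤ (B * S) * C := by gcongr
      _ = S * (B * C) := by ring
  exact max_le hmin hBC

lemma max_one_sub_min_pos (hS : 0 < S) (hB : 1 ≤ B * S) (hC : 0 < C) :
    0 < max (1 - min E 1) (1 / (B * C)) :=
  lt_max_of_lt_right (one_div_pos.2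
    (mul_pos (pos_of_mul_pos_left (one_pos.trans_le hB) hS.le) hC))

lemma le_min_div_mul (hS : 0 < S) (hm : 0 < m) (hmST : m ≤ S / T)
    (hM : 0 ≤ M) (hMb : M ≤ b) (hG : 1 ≤ G) (hMG : M / T ≤ c * (G / S)) :
    M ≤ min (c / m) b * G := by
  rw [min_mul_of_nonneg _ _ (zero_le_one.trans hG)]
  refine le_min ?_ (hMb.trans (le_mul_of_one_le_right (hM.trans hMb) hG))
  have hcG : M * (S / T) ≤ c * G := by
    calc M * (S / T) = M / T * S := by ring
      _ ≤ c * (G / S) * S := by gcongr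
      _ = c * G := by field_simp
  calc M ≤ c * G / m := by
        rw [le_div_iff₀ hm]
        exact (mul_le_mul_of_nonneg_left hmST hM).trans hcG
    _ = c / m * G := by ring

end Scalar

section WeightedSums

variable {F : Type*} {p q g : F → ℝ} {B C E S T b : ℝ}

lemma hasSum_of_tsum_eq_of_ne_zero {M : Type*} [AddCommMonoid M] [TopologicalSpace M]
    {u : F → M} {a : M} (hu : ∑' x, u x = a) (ha : a ≠ 0) : HasSum u a := by
  have hs : Summable u := by
    by_contra h
    exact ha (hu ▸ tsum_eq_zero_of_not_summable h)
  exact hu ▸ hs.hasSum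

lemma summable_abs_sub_mul (hg : ∀ x, 0 ≤ g x) (hp : Summable fun x => p x * g x)
    (hq : Summable fun x => q x * g x) : Summable fun x => |p x - q x| * g x :=
  (hp.sub hq).abs.congr fun x => by rw [← sub_mul, abs_mul, abs_of_nonneg (hg x)]

lemma tsum_mul_le_tsum_mul_add_tsum_abs_sub_mul (hg : ∀ x, 0 ≤ g x)
    (hp : Summable fun x => p x * g x) (hq : Summable fun x => q x * g x) :
    ∑' x, q x * g x ≤ ∑' x, p x * g x + ∑' x, |p x - q x| * g x := by
  have hpq := summable_abs_sub_mul hg hp hq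
  rw [← hp.tsum_add hpq]
  refine hq.tsum_le_tsum (fun x => ?_) (hp.add hpq)
  rw [← add_mul]
  exact mul_le_mul_of_nonneg_right (by linarith [le_abs_self (q x - p x), abs_sub_comm (p x) (q x)])
    (hg x)

lemma summable_div_mul (hp : Summable fun x => p x * g x) (S : ℝ) :
    Summable fun x => p x / S * g x := by
  simpa only [div_mul_eq_mul_div] using hp.div_const S

lemma tsum_div_mul (p g : F → ℝ) (S : ℝ) :
    ∑' x, p x / S * g x = (∑' x, p x * g x) / S := by
  simp only [div_mul_eq_mul_div, tsum_div_const]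

lemma abs_sub_le_mul_of_tsum_abs_div_sub_div_le (hp : HasSum p 1) (hq : HasSum q 1)
    (hS : 0 < S) (hT : 0 < T) (h : ∑' x, |p x / S - q x / T| ≤ E / S) :
    |S - T| ≤ E * T := by
  have hsum : HasSum (fun x => p x / S - q x / T) (1 / S - 1 / T) :=
    (hp.div_const S).sub (hq.div_const T)
  have hinv : |1 / S - 1 / T| ≤ E / S := by
    rw [← hsum.tsum_eq]
    exact (norm_tsum_le_tsum_norm hsum.summable.norm).trans h
  calc |S - T| = |(1 / S - 1 / T) * (S * T)| := by
        rw [abs_sub_comm]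
        congr 1
        field_simp
    _ = |1 / S - 1 / T| * (S * T) := by rw [abs_mul, abs_of_pos (mul_pos hS hT)]
    _ ≤ E / S * (S * T) := by gcongr
    _ = E * T := by field_simp

lemma tsum_abs_sub_mul_le_of_tsum_abs_div_sub_div_mul_le (hg : ∀ x, 0 ≤ g x) (hq0 : ∀ x, 0 ≤ q x)
    (hp : Summable fun x => p x * g x) (hq : Summable fun x => q x * g x)
    (hS : 0 < S) (hT : 0 < T) (hST : |S - T| ≤ E * T)
    (h : ∑' x, |p x / S - q x / T| * g x ≤ E * ((∑' x, p x * g x) / S)) :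
    ∑' x, |p x - q x| * g x ≤ E * (∑' x, p x * g x + ∑' x, q x * g x) := by
  have hdiv : Summable fun x => S * (|p x / S - q x / T| * g x) :=
    (summable_abs_sub_mul hg (summable_div_mul hp S) (summable_div_mul hq T)).mul_left S
  have hpoint : ∀ x, |p x - q x| * g x ≤
      S * (|p x / S - q x / T| * g x) + E * (q x * g x) := fun x =>
    calc |p x - q x| * g x ≤ (S * |p x / S - q x / T| + E * q x) * g x :=
          mul_le_mul_of_nonneg_right
            (abs_sub_le_mul_abs_div_sub_div_add hS hT hST (hq0 x)) (hg x)
      _ = S * (|p x / S - q x / T| * g x) + E * (q x * g x) := by ring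
  calc ∑' x, |p x - q x| * g x
      ≤ ∑' x, (S * (|p x / S - q x / T| * g x) + E * (q x * g x)) :=
        (summable_abs_sub_mul hg hp hq).tsum_le_tsum hpoint (hdiv.add (hq.mul_left E))
    _ = S * ∑' x, |p x / S - q x / T| * g x + E * ∑' x, q x * g x := by
        rw [hdiv.tsum_add (hq.mul_left E), tsum_mul_left, tsum_mul_left]
    _ ≤ S * (E * ((∑' x, p x * g x) / S)) + E * ∑' x, q x * g x := by gcongr
    _ = E * (∑' x, p x * g x + ∑' x, q x * g x) := by field_simp

lemma tsum_mul_div_le_of_tsum_abs_div_sub_div_mul_le (hg : ∀ x, 0 ≤ g x)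
    (hp : Summable fun x => p x * g x) (hq : Summable fun x => q x * g x)
    (h : ∑' x, |p x / S - q x / T| * g x ≤ E * ((∑' x, p x * g x) / S)) :
    (∑' x, q x * g x) / T ≤ (1 + E) * ((∑' x, p x * g x) / S) := by
  have htri := tsum_mul_le_tsum_mul_add_tsum_abs_sub_mul hg
    (summable_div_mul hp S) (summable_div_mul hq T)
  rw [tsum_div_mul, tsum_div_mul] at htri
  linarith

lemma tsum_abs_sub_mul_le_min (hg : ∀ x, 0 ≤ g x) (hq0 : ∀ x, 0 ≤ q x)
    (hp : Summable fun x => p x * g x) (hq : Summable fun x => q x * g x)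
    (hp1 : 1 ≤ ∑' x, p x * g x) (hqb : ∑' x, q x * g x ≤ b)
    (hS : 0 < S) (hT : 0 < T) (hST : |S - T| ≤ E * T) (hTC : T ≤ C) (hBS : 1 ≤ B * S)
    (h : ∑' x, |p x / S - q x / T| * g x ≤ E * ((∑' x, p x * g x) / S)) :
    ∑' x, |p x - q x| * g x ≤
      E * (1 + min ((1 + E) / max (1 - min E 1) (1 / (B * C))) b) * ∑' x, p x * g x := by
  have hE : 0 ≤ E := nonneg_of_mul_nonneg_left ((abs_nonneg _).trans hST) hT
  have hqp : ∑' x, q x * g x ≤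
      min ((1 + E) / max (1 - min E 1) (1 / (B * C))) b * ∑' x, p x * g x :=
    le_min_div_mul hS (max_one_sub_min_pos hS hBS (hT.trans_le hTC))
      (max_one_sub_min_le_div hS hT hST hTC hBS)
      (tsum_nonneg fun x => mul_nonneg (hq0 x) (hg x)) hqb hp1
      (tsum_mul_div_le_of_tsum_abs_div_sub_div_mul_le hg hp hq h)
  calc ∑' x, |p x - q x| * g x ≤ E * (∑' x, p x * g x + ∑' x, q x * g x) :=
        tsum_abs_sub_mul_le_of_tsum_abs_div_sub_div_mul_le hg hq0 hp hq hS hT hST h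
    _ ≤ E * (∑' x, p x * g x +
          min ((1 + E) / max (1 - min E 1) (1 / (B * C))) b * ∑' x, p x * g x) := by gcongr
    _ = E * (1 + min ((1 + E) / max (1 - min E 1) (1 / (B * C))) b) * ∑' x, p x * g x := by ring

lemma one_le_tsum_mul (hp0 : ∀ x, 0 ≤ p x) (hp : HasSum p 1) (hg : ∀ x, 1 ≤ g x)
    (hpg : Summable fun x => p x * g x) : 1 ≤ ∑' x, p x * g x :=
  hasSum_le (fun x => le_mul_of_one_le_right (hp0 x) (hg x)) hp hpg.hasSum

lemma summable_mul_of_le {f : F → ℝ} (hp0 : ∀ x, 0 ≤ p x) (hg : ∀ x, 0 ≤ g x)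
    (hgf : ∀ x, g x ≤ f x) (hpf : Summable fun x => p x * f x) :
    Summable fun x => p x * g x :=
  hpf.of_nonneg_of_le (fun x => mul_nonneg (hp0 x) (hg x))
    fun x => mul_le_mul_of_nonneg_left (hgf x) (hp0 x)

end WeightedSums

section Transform

variable {F : Type*} {p q f v h : F → ℝ} {B C E : ℝ}

/-- The normalizing constant `∑ p f / v` of the transformed vector `hatP p f v`. -/
noncomputable def hatMass (p f v : F → ℝ) : ℝ :=
  ∑' x, p x * (f x / v x)

lemma summable_mul_div (hp0 : ∀ x, 0 ≤ p x) (hp : Summable p) (hw : ∀ x, 0 ≤ f x / v x)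
    (hC : ∀ x, f x / v x ≤ C) : Summable fun x => p x * (f x / v x) :=
  summable_mul_of_le hp0 hw hC (hp.mul_right C)

lemma hatMass_pos (hp0 : ∀ x, 0 ≤ p x) (hp : HasSum p 1) (hw : ∀ x, 0 < f x / v x)
    (hC : ∀ x, f x / v x ≤ C) : 0 < hatMass p f v := by
  obtain ⟨x, hx⟩ : ∃ x, p x ≠ 0 := by
    by_contra! hzero
    simpa [hzero] using hp.tsum_eq
  have hs := summable_mul_div hp0 hp.summable (fun y => (hw y).le) hC
  exact hs.tsum_pos (fun y => mul_nonneg (hp0 y) (hw y).le) x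
    (mul_pos ((hp0 x).lt_of_ne' hx) (hw x))

lemma hatMass_le (hp0 : ∀ x, 0 ≤ p x) (hp : HasSum p 1) (hw : ∀ x, 0 ≤ f x / v x)
    (hC : ∀ x, f x / v x ≤ C) : hatMass p f v ≤ C := by
  calc hatMass p f v ≤ 1 * C := hasSum_le (fun x => mul_le_mul_of_nonneg_left (hC x) (hp0 x))
        (summable_mul_div hp0 hp.summable hw hC).hasSum (hp.mul_right C)
    _ = C := one_mul C

lemma hatP_nonneg (hp0 : ∀ x, 0 ≤ p x) (hw : ∀ x, 0 ≤ f x / v x) (x : F) : 0 ≤ hatP p f v x :=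
  div_nonneg (mul_nonneg (hp0 x) (hw x)) (tsum_nonneg fun y => mul_nonneg (hp0 y) (hw y))

lemma hatP_eq_div_mul (p f v : F → ℝ) (x : F) :
    hatP p f v x = p x / hatMass p f v * (f x / v x) :=
  mul_div_right_comm _ _ _

lemma hatP_mul_mul_div (hf : ∀ x, f x ≠ 0) (hv : ∀ x, v x ≠ 0) (x : F) :
    hatP p f v x * (h x * (v x / f x)) = p x / hatMass p f v * h x := by
  rw [hatP_eq_div_mul, div_mul_mul_div_cancel (hf x) (hv x)]

lemma abs_hatP_sub_hatP_mul_mul_div (hf : ∀ x, 0 < f x) (hv : ∀ x, 0 < v x) (x : F) :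
    |hatP p f v x - hatP q f v x| * (h x * (v x / f x)) =
      |p x / hatMass p f v - q x / hatMass q f v| * h x := by
  rw [hatP_eq_div_mul, hatP_eq_div_mul, ← sub_mul, abs_mul, abs_of_pos (div_pos (hf x) (hv x)),
    div_mul_mul_div_cancel (hf x).ne' (hv x).ne']

lemma hatP_mul_eq_div_hatMass_mul (hv : ∀ x, v x ≠ 0) (x : F) :
    hatP p f v x * v x = p x / hatMass p f v * f x := by
  rw [hatP_eq_div_mul, mul_assoc, div_mul_cancel₀ _ (hv x)]

lemma summable_mul_of_summable_hatP_mul (hv : ∀ x, v x ≠ 0) (hS : hatMass p f v ≠ 0)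
    (hs : Summable fun x => hatP p f v x * v x) : Summable fun x => p x * f x := by
  refine (hs.mul_left (hatMass p f v)).congr fun x => ?_
  rw [hatP_mul_eq_div_hatMass_mul hv, ← mul_assoc, mul_div_cancel₀ _ hS]

lemma one_le_mul_hatMass (hp0 : ∀ x, 0 ≤ p x) (hp : HasSum p 1) (hf : ∀ x, 1 ≤ f x)
    (hv : ∀ x, v x ≠ 0) (hS : 0 < hatMass p f v) (hs : Summable fun x => hatP p f v x * v x)
    (hB : ∑' x, hatP p f v x * v x ≤ B) : 1 ≤ B * hatMass p f v := by
  simp only [hatP_mul_eq_div_hatMass_mul hv, tsum_div_mul] at hB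
  exact (one_le_tsum_mul hp0 hp hf (summable_mul_of_summable_hatP_mul hv hS.ne' hs)).trans
    ((div_le_iff₀ hS).1 hB)

lemma tsum_abs_hatP_sub_mul_le_iff (hf : ∀ x, 0 < f x) (hv : ∀ x, 0 < v x) :
    ∑' x, |hatP p f v x - hatP q f v x| * (h x * (v x / f x)) ≤
        E * ∑' x, hatP p f v x * (h x * (v x / f x)) ↔
      ∑' x, |p x / hatMass p f v - q x / hatMass q f v| * h x ≤
        E * ((∑' x, p x * h x) / hatMass p f v) := by
  have hmul := fun x => hatP_mul_mul_div (p := p) (h := h) (fun y => (hf y).ne')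
    (fun y => (hv y).ne') x
  simp only [abs_hatP_sub_hatP_mul_mul_div hf hv, hmul, tsum_div_mul]

lemma abs_hatMass_sub_hatMass_le (hf : ∀ x, 0 < f x) (hv : ∀ x, 0 < v x) (hp : HasSum p 1)
    (hq : HasSum q 1) (hS : 0 < hatMass p f v) (hT : 0 < hatMass q f v)
    (hbound : ∑' x, |hatP p f v x - hatP q f v x| * (v x / f x) ≤
      E * ∑' x, hatP p f v x * (v x / f x)) :
    |hatMass p f v - hatMass q f v| ≤ E * hatMass q f v := by
  have hdiff := (tsum_abs_hatP_sub_mul_le_iff (h := fun _ => 1) hf hv).1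
    (by simpa only [one_mul] using hbound)
  simp only [mul_one] at hdiff
  rw [hp.tsum_eq, mul_one_div] at hdiff
  exact abs_sub_le_mul_of_tsum_abs_div_sub_div_le hp hq hS hT hdiff

lemma tsum_abs_hatP_sub_mul_le_of_forall (hp0 : ∀ x, 0 ≤ p x) (hf : ∀ x, 0 < f x)
    (hv : ∀ x, 0 < v x) (hs : Summable fun x => hatP p f v x * v x)
    (hbound : ∀ g : F → ℝ, (∀ x, 0 < g x ∧ g x ≤ v x) → Summable (fun x => hatP p f v x * g x) →
      ∑' x, |hatP p f v x - hatP q f v x| * g x ≤ E * ∑' x, hatP p f v x * g x)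
    (hh : ∀ x, 0 < h x ∧ h x ≤ f x) :
    ∑' x, |hatP p f v x - hatP q f v x| * (h x * (v x / f x)) ≤
      E * ∑' x, hatP p f v x * (h x * (v x / f x)) := by
  have hpos : ∀ x, 0 < h x * (v x / f x) := fun x => mul_pos (hh x).1 (div_pos (hv x) (hf x))
  have hle : ∀ x, h x * (v x / f x) ≤ v x := fun x =>
    calc h x * (v x / f x) ≤ f x * (v x / f x) :=
          mul_le_mul_of_nonneg_right (hh x).2 (div_pos (hv x) (hf x)).le
      _ = v x := mul_div_cancel₀ _ (hf x).ne'
  have hhat0 : ∀ x, 0 ≤ hatP p f v x := hatP_nonneg hp0 fun x => (div_pos (hf x) (hv x)).le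
  exact hbound _ (fun x => ⟨hpos x, hle x⟩)
    (summable_mul_of_le hhat0 (fun x => (hpos x).le) hle hs)

end Transform

theorem stmt13_general {F : Type*} {p q f g v : F → ℝ} {b B C E : ℝ}
    (hv : ∀ x, 0 < v x) (hC : ∀ x, f x / v x ≤ C) (hg : ∀ x, 1 ≤ g x ∧ g x ≤ f x)
    (hp0 : ∀ x, 0 ≤ p x) (hp1 : ∑' x, p x = 1) (hq0 : ∀ x, 0 ≤ q x) (hq1 : ∑' x, q x = 1)
    (hpv : Summable (fun x => hatP p f v x * v x) ∧ ∑' x, hatP p f v x * v x ≤ B)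
    (hqf : Summable (fun x => q x * f x) ∧ ∑' x, q x * f x ≤ b)
    (hbound_one : ∑' x, |hatP p f v x - hatP q f v x| * (v x / f x) ≤
      E * ∑' x, hatP p f v x * (v x / f x))
    (hbound_g : ∑' x, |hatP p f v x - hatP q f v x| * (g x * (v x / f x)) ≤
      E * ∑' x, hatP p f v x * (g x * (v x / f x))) :
    ∑' x, |p x - q x| * g x ≤
      E * (1 + min ((1 + E) / max (1 - min E 1) (1 / (B * C))) b) * ∑' x, p x * g x := by
  have hp := hasSum_of_tsum_eq_of_ne_zero hp1 one_ne_zero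
  have hq := hasSum_of_tsum_eq_of_ne_zero hq1 one_ne_zero
  have hf : ∀ x, 1 ≤ f x := fun x => (hg x).1.trans (hg x).2
  have hf0 : ∀ x, 0 < f x := fun x => one_pos.trans_le (hf x)
  have hg0 : ∀ x, 0 ≤ g x := fun x => zero_le_one.trans (hg x).1
  have hw : ∀ x, 0 < f x / v x := fun x => div_pos (hf0 x) (hv x)
  have hS := hatMass_pos hp0 hp hw hC
  have hT := hatMass_pos hq0 hq hw hC
  have hTC := hatMass_le hq0 hq (fun x => (hw x).le) hC
  have hBS := one_le_mul_hatMass hp0 hp hf (fun x => (hv x).ne') hS hpv.1 hpv.2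
  have hpg : Summable fun x => p x * g x := summable_mul_of_le hp0 hg0 (fun x => (hg x).2)
    (summable_mul_of_summable_hatP_mul (fun x => (hv x).ne') hS.ne' hpv.1)
  have hqg : Summable fun x => q x * g x :=
    summable_mul_of_le hq0 hg0 (fun x => (hg x).2) hqf.1
  have hqgb : ∑' x, q x * g x ≤ b := (hqg.tsum_le_tsum
    (fun x => mul_le_mul_of_nonneg_left (hg x).2 (hq0 x)) hqf.1).trans hqf.2
  exact tsum_abs_sub_mul_le_min hg0 hq0 hpg hqg
    (one_le_tsum_mul hp0 hp (fun x => (hg x).1) hpg) hqgb hS hT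
    (abs_hatMass_sub_hatMass_le hf0 hv hp hq hS hT hbound_one) hTC hBS
    ((tsum_abs_hatP_sub_mul_le_iff hf0 hv).1 hbound_g)

/-- Bound (3.11) of the paper's Theorem 3.1, in per-function form over functions
`g` with `e ≤ g ≤ f`. -/
theorem stmt13 {F : Type*} [Countable F] (v f : F → ℝ)
    (hv : ∀ x, 0 < v x) (hf : ∀ x, 1 ≤ f x)
    (Cbar : ℝ) (hCbar : ∀ x, f x / v x ≤ Cbar)
    (pi pin : F → ℝ)
    (hpi0 : ∀ x, 0 ≤ pi x) (hpi1 : (∑' x, pi x) = 1)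
    (hpin0 : ∀ x, 0 ≤ pin x) (hpin1 : (∑' x, pin x) = 1)
    (bhat : ℝ) (hbhat : 0 < bhat)
    (hhatv : Summable (fun x => hatP pi f v x * v x) ∧
      (∑' x, hatP pi f v x * v x) ≤ bhat)
    (b : ℝ) (hb : 0 < b)
    (hpinf : Summable (fun x => pin x * f x) ∧ (∑' x, pin x * f x) ≤ b)
    (Ehat : ℝ) (hEhat : 0 ≤ Ehat)
    (hbound : ∀ g : F → ℝ, (∀ x, 0 < g x ∧ g x ≤ v x) →
      Summable (fun x => hatP pi f v x * g x) →
      (∑' x, |hatP pi f v x - hatP pin f v x| * g x) ≤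
        Ehat * ∑' x, hatP pi f v x * g x) :
    ∀ g : F → ℝ, (∀ x, 1 ≤ g x ∧ g x ≤ f x) →
      (∑' x, |pi x - pin x| * g x) ≤
        Ehat * (1 + min ((1 + Ehat) / max (1 - min Ehat 1) (1 / (bhat * Cbar))) b) *
          ∑' x, pi x * g x := by
  intro g hg
  have hbound_test {h : F → ℝ} (hh : ∀ x, 0 < h x ∧ h x ≤ f x) :=
    tsum_abs_hatP_sub_mul_le_of_forall hpi0 (fun x => one_pos.trans_le (hf x)) hv hhatv.1 hbound hh
  exact stmt13_general hv hCbar hg hpi0 hpi1 hpin0 hpin1 hhatv hpinf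
    (by simpa only [one_mul] using hbound_test (h := fun _ => 1) fun x => ⟨one_pos, hf x⟩)
    (hbound_test fun x => ⟨one_pos.trans_le (hg x).1, (hg x).2⟩)
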